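/- Dimension of the null space used to generate InterMac keys: fix p ∈ Fin s, and let Π_{M_p}^⊥ = {z ∈ F^{n+m} : v_{i,j} · z = 0 for all i ≠ p and all j ∈ Fin g}, the set of vectors orthogonal to the committed source packets of all sources other than S_p. Then Π_{M_p}^⊥ is a linear subspace of F^{n+m} of dimension exactly n + g. -/

import Mathlib

theorem srcIdx_lt {s g : ℕ} (i : Fin s) (j : Fin g) : g * i.1 + j.1 < s * g := by
  have hi := i.2; have hj := j.2
  calc g * i.1 + j.1 < g * (i.1 + 1) := by rw [Nat.mul_add, Nat.mul_one]; omega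
    _ ≤ g * s := Nat.mul_le_mul_left g hi
    _ = s * g := Nat.mul_comm g s

/-- The index `g·i + j` of the augmentation coordinate of the source packet `v_{i,j}`. -/
def srcIdx {s g : ℕ} (i : Fin s) (j : Fin g) : Fin (s * g) :=
  ⟨g * i.1 + j.1, srcIdx_lt i j⟩

/-- The augmented source packet `v_{i,j} = (v̂_{i,j}, e_{g·i+j}) ∈ F^{n+m}`, `m = s·g`. -/
def pkt {q s g n : ℕ} (vhat : Fin s → Fin g → Fin n → ZMod q)
    (i : Fin s) (j : Fin g) : Fin (n + s * g) → ZMod q :=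
  Fin.append (vhat i j) (Pi.single (srcIdx i j) 1)

/-!
The product `v_{i,j} · z` is the augmentation coordinate of `z` with index `g·i+j` plus a linear
function of the data coordinates. Hence the `m` products together with the `n` data coordinates form
a new linear coordinate system of `F^{n+m}`. The null space is cut out by the vanishing of some of
these new coordinates, so its dimension is the number of the remaining ones: the `n` data
coordinates and the `g` products with the packets of `S_p`.
-/

open Module
open scoped Matrix

theorem finrank_iInf_ker_proj_notMem {R κ : Type*} [Semiring R] [StrongRankCondition R]
    (I : Finset κ) :
    finrank R ↥(⨅ k ∉ I, LinearMap.ker (LinearMap.proj k : (κ → R) →ₗ[R] R)) = I.card := by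
  classical
  have kept : ↥(⨅ k ∉ I, LinearMap.ker (LinearMap.proj k : (κ → R) →ₗ[R] R)) ≃ₗ[R] (I → R) :=
    LinearMap.iInfKerProjEquiv R (fun _ ↦ R) (I := (I : Set κ)) (J := (I : Set κ)ᶜ)
      disjoint_compl_right (Set.union_compl_self _).ge
  rw [kept.finrank_eq, finrank_fintype_fun_eq_card, Fintype.card_coe]

section Augmented

variable {R ι : Type*} [CommRing R] {n m : ℕ}

/-- The `k`-th row of the matrix `a`, augmented by the standard basis vector with index `e k`; the
packets `v_{i,j}` are the case of rows indexed by the pairs `(i, j)`. -/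
def augmentedRow (a : ι → Fin n → R) (e : ι ≃ Fin m) (k : ι) : Fin (n + m) → R :=
  Fin.append (a k) (Pi.single (e k) 1)

theorem augmentedRow_dotProduct (a : ι → Fin n → R) (e : ι ≃ Fin m) (k : ι)
    (z : Fin (n + m) → R) :
    augmentedRow a e k ⬝ᵥ z =
      a k ⬝ᵥ (fun r ↦ z (Fin.castAdd m r)) + z (Fin.natAdd n (e k)) := by
  simp [augmentedRow, dotProduct, Fin.sum_univ_add, Pi.single_apply]

/-- The linear coordinate system formed by the first `n` coordinates and the dot products with the
augmented rows. -/
def augmentedCoords (a : ι → Fin n → R) (e : ι ≃ Fin m) :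
    (Fin (n + m) → R) ≃ₗ[R] (Fin n ⊕ ι → R) :=
  LinearEquiv.funCongrLeft R R finSumFinEquiv ≪≫ₗ
    LinearEquiv.sumPiEquivProdPi R (Fin n) (Fin m) (fun _ ↦ R) ≪≫ₗ
    (LinearEquiv.refl R (Fin n → R)).skewProd (LinearEquiv.funCongrLeft R R e)
      (Matrix.mulVecLin (Matrix.of a)) ≪≫ₗ
    (LinearEquiv.sumPiEquivProdPi R (Fin n) ι (fun _ ↦ R)).symm

theorem augmentedCoords_inr (a : ι → Fin n → R) (e : ι ≃ Fin m) (z : Fin (n + m) → R) (k : ι) :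
    augmentedCoords a e z (Sum.inr k) = augmentedRow a e k ⬝ᵥ z :=
  (add_comm _ _).trans (augmentedRow_dotProduct a e k z).symm

/-- The vectors orthogonal to all augmented rows whose index is not in `K`, as in `Π_{M_p}^⊥`. -/
def augmentedNullSpace (a : ι → Fin n → R) (e : ι ≃ Fin m) (K : Finset ι) :
    Submodule R (Fin (n + m) → R) :=
  ⨅ k ∉ K, LinearMap.ker (dotProductBilin R R (augmentedRow a e k))

theorem mem_augmentedNullSpace {a : ι → Fin n → R} {e : ι ≃ Fin m} {K : Finset ι}
    {z : Fin (n + m) → R} :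
    z ∈ augmentedNullSpace a e K ↔ ∀ k ∉ K, augmentedRow a e k ⬝ᵥ z = 0 := by
  simp [augmentedNullSpace, Submodule.mem_iInf]

theorem augmentedNullSpace_eq_comap (a : ι → Fin n → R) (e : ι ≃ Fin m) (K : Finset ι) :
    augmentedNullSpace a e K =
      (⨅ k ∉ Finset.univ.disjSum K,
        LinearMap.ker (LinearMap.proj k : (Fin n ⊕ ι → R) →ₗ[R] R)).comap
        (augmentedCoords a e).toLinearMap := by
  ext z
  simp [mem_augmentedNullSpace, Submodule.mem_iInf, augmentedCoords_inr]

theorem finrank_augmentedNullSpace [Nontrivial R] (a : ι → Fin n → R) (e : ι ≃ Fin m)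
    (K : Finset ι) : finrank R (augmentedNullSpace a e K) = n + K.card := by
  rw [augmentedNullSpace_eq_comap, ((augmentedCoords a e).ofSubmodule' _).finrank_eq,
    finrank_iInf_ker_proj_notMem, Finset.card_disjSum, Finset.card_fin]

end Augmented

theorem finProdFinEquiv_eq_srcIdx {s g : ℕ} (i : Fin s) (j : Fin g) :
    finProdFinEquiv (i, j) = srcIdx i j :=
  Fin.ext (Nat.add_comm _ _)

theorem null_space_dimension_general {R : Type*} [CommRing R] [Nontrivial R] {s g n : ℕ}
    (vhat : Fin s → Fin g → Fin n → R) (C : Finset (Fin s)) :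
    ∃ W : Submodule R (Fin (n + s * g) → R),
      (W : Set (Fin (n + s * g) → R)) =
        {z | ∀ i ∉ C, ∀ j, Fin.append (vhat i j) (Pi.single (srcIdx i j) 1) ⬝ᵥ z = 0} ∧
      finrank R W = n + C.card * g := by
  refine ⟨augmentedNullSpace (Function.uncurry vhat) finProdFinEquiv (C ×ˢ Finset.univ), ?_, ?_⟩
  · ext z
    simp [mem_augmentedNullSpace, augmentedRow, finProdFinEquiv_eq_srcIdx, forall_comm (α := Fin g)]
  · rw [finrank_augmentedNullSpace, Finset.card_product, Finset.card_fin]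

/-- the set `Π_{M_p}^⊥` of vectors orthogonal to the committed source
packets of all sources other than `S_p` is a linear subspace of `F^{n+m}` of
dimension exactly `n + g`. -/
theorem null_space_dimension
    (q s g n : ℕ) (hq : q.Prime) (hs : 0 < s) (hg : 0 < g) (hn : 0 < n)
    (vhat : Fin s → Fin g → Fin n → ZMod q) (p : Fin s) :
    ∃ W : Submodule (ZMod q) (Fin (n + s * g) → ZMod q),
      (W : Set (Fin (n + s * g) → ZMod q))
        = {z | ∀ i : Fin s, i ≠ p → ∀ j : Fin g,
            (∑ r : Fin (n + s * g), pkt vhat i j r * z r) = 0} ∧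
      Module.finrank (ZMod q) W = n + g := by
  have : Fact q.Prime := ⟨hq⟩
  simpa [pkt, dotProduct] using null_space_dimension_general vhat {p}
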